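/- Bound on the first desired-channel cross term: with the notation below, Σ_{k1D,k10,k2D,k20} C(k1D,k10,k2D,k20)·((P^D)_{k1D,k10} − π)·π³ ≤ c₂·(√λ)^D, where c₂ = Σ_{k1D,k2D,k20} (max_{k10} C(k1D,k10,k2D,k20))·π²·√π. -/

import Mathlib

/-!
Summed over `k10`, the weights pair with the deviations `(P ^ D) k1D k10 - π`, so the `ℓ^∞`-`ℓ^1`
Hölder inequality bounds the term by the maximum of the weights times the total deviation
`S = ∑ m, |(P ^ D) k1D m - π|`. As `π = 1 / N`, the convergence bound reads `π * S ^ 2 ≤ λ ^ D`,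
so that one of the three factors `π` is absorbed by `π * S ≤ √π * √(λ ^ D)`.
-/

section Holder

variable {ι κ τ R : Type*} [Ring R] [LinearOrder R] [IsOrderedRing R]

theorem sum_mul_le_sup'_mul_sum_abs (s : Finset κ) (hs : s.Nonempty) {f : κ → R}
    (hf : ∀ k ∈ s, 0 ≤ f k) (g : κ → R) :
    ∑ k ∈ s, f k * g k ≤ s.sup' hs f * ∑ k ∈ s, |g k| := by
  rw [Finset.mul_sum]
  refine Finset.sum_le_sum fun k hk => ?_
  calc
    f k * g k ≤ f k * |g k| := mul_le_mul_of_nonneg_left (le_abs_self _) (hf k hk)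
    _ ≤ s.sup' hs f * |g k| :=
      mul_le_mul_of_nonneg_right (Finset.le_sup' f hk) (abs_nonneg _)

theorem sum_mul_le_sum_sup'_mul_of_sum_abs_le [Fintype ι] [Fintype κ] [Nonempty κ] [Fintype τ]
    {C : ι × κ × τ → R} (hC : ∀ x, 0 ≤ C x) {q : ι → κ → R} {ε : R}
    (hq : ∀ i, ∑ k, |q i k| ≤ ε) :
    ∑ i, ∑ k, ∑ t, C (i, k, t) * q i k ≤
      (∑ i, ∑ t, Finset.univ.sup' Finset.univ_nonempty fun k => C (i, k, t)) * ε := by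
  simp_rw [Finset.sum_mul]
  refine Finset.sum_le_sum fun i _ => ?_
  rw [Finset.sum_comm]
  refine Finset.sum_le_sum fun t _ => ?_
  have sup_nonneg : 0 ≤ Finset.univ.sup' Finset.univ_nonempty fun k => C (i, k, t) :=
    Finset.le_sup'_of_le _ (Finset.mem_univ (Classical.arbitrary κ)) (hC _)
  exact (sum_mul_le_sup'_mul_sum_abs _ _ (fun k _ => hC _) _).trans
    (mul_le_mul_of_nonneg_left (hq i) sup_nonneg)

end Holder

theorem mul_le_sqrt_mul_sqrt_of_mul_sq_le {a s δ : ℝ} (ha : 0 ≤ a) (h : a * s ^ 2 ≤ δ) :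
    a * s ≤ √a * √δ := by
  have sqrt_mul_le : √a * s ≤ √δ := by
    apply Real.le_sqrt_of_sq_le
    rwa [mul_pow, Real.sq_sqrt ha]
  calc
    a * s = √a * (√a * s) := by rw [← mul_assoc, Real.mul_self_sqrt ha]
    _ ≤ √a * √δ := mul_le_mul_of_nonneg_left sqrt_mul_le (Real.sqrt_nonneg a)

theorem sqrt_pow_of_nonneg {x : ℝ} (hx : 0 ≤ x) (n : ℕ) : √(x ^ n) = √x ^ n := by
  rw [Real.sqrt_eq_iff_mul_self_eq (by positivity) (by positivity), ← mul_pow,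
    Real.mul_self_sqrt hx]

theorem desired_channel_cross_term_bound_general {ι κ τ : Type*} [Fintype ι] [Fintype κ]
    [Nonempty κ] [Fintype τ] (Q : Matrix ι κ ℝ) {π δ : ℝ} (hπ : 0 ≤ π)
    (hQ : ∀ i, π * (∑ k, |Q i k - π|) ^ 2 ≤ δ) (C : ι × κ × τ → ℝ) (hC : ∀ x, 0 ≤ C x) :
    ∑ i, ∑ k, ∑ t, C (i, k, t) * (Q i k - π) * π ^ 3 ≤
      (∑ i, ∑ t, (Finset.univ.sup' Finset.univ_nonempty fun k => C (i, k, t)) * π ^ 2 * √π) *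
        √δ := by
  have deviation_le (i : ι) : ∑ k, |π * (Q i k - π)| ≤ √π * √δ := by
    simp_rw [abs_mul, abs_of_nonneg hπ, ← Finset.mul_sum]
    exact mul_le_sqrt_mul_sqrt_of_mul_sq_le hπ (hQ i)
  calc
    _ = (∑ i, ∑ k, ∑ t, C (i, k, t) * (π * (Q i k - π))) * π ^ 2 := by
      simp_rw [Finset.sum_mul]
      congr! 3
      ring
    _ ≤ (∑ i, ∑ t, Finset.univ.sup' Finset.univ_nonempty fun k => C (i, k, t)) * (√π * √δ) *
        π ^ 2 :=
      mul_le_mul_of_nonneg_right (sum_mul_le_sum_sup'_mul_of_sum_abs_le hC deviation_le)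
        (sq_nonneg π)
    _ = _ := by
      simp_rw [← Finset.sum_mul]
      ring

/-- Bound on the first desired-channel cross term:
`Σ C·((P^D)_{k1D,k10} − π)·π³ ≤ c₂·(√λ)^D`, where
`c₂ = Σ_{k1D,k2D,k20} (max_{k10} C)·π²·√π` and `π = 1/N`.
`P` is row stochastic and satisfies the Markov convergence bound
`(Σ_m |(P^D)_{lm} − 1/N|)² ≤ N·λ^D`. -/
theorem desired_channel_cross_term_bound (N : ℕ) [NeZero N]
    (P : Matrix (Fin N) (Fin N) ℝ)
    (hP0 : ∀ l m, 0 ≤ P l m) (hP1 : ∀ l, ∑ m, P l m = 1)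
    (lam : ℝ) (hlam0 : 0 ≤ lam) (hlam1 : lam ≤ 1) (D : ℕ)
    (hconv : ∀ l, (∑ m, |(P ^ D) l m - 1 / (N : ℝ)|) ^ 2 ≤ (N : ℝ) * lam ^ D)
    (C : Fin N × Fin N × Fin N × Fin N → ℝ) (hC : ∀ x, 0 ≤ C x) :
    (∑ k1D : Fin N, ∑ k10 : Fin N, ∑ k2D : Fin N, ∑ k20 : Fin N,
        C (k1D, k10, k2D, k20) * ((P ^ D) k1D k10 - 1 / (N : ℝ))
          * (1 / (N : ℝ)) ^ 3)
      ≤ (∑ k1D : Fin N, ∑ k2D : Fin N, ∑ k20 : Fin N,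
          (Finset.univ.sup' Finset.univ_nonempty fun k10 : Fin N =>
              C (k1D, k10, k2D, k20))
            * (1 / (N : ℝ)) ^ 2 * Real.sqrt (1 / (N : ℝ)))
        * Real.sqrt lam ^ D := by
  have hN : (0 : ℝ) < N := Nat.cast_pos.mpr (NeZero.pos N)
  have hQ (l : Fin N) : 1 / (N : ℝ) * (∑ m, |(P ^ D) l m - 1 / (N : ℝ)|) ^ 2 ≤ lam ^ D := by
    rw [one_div_mul_eq_div, div_le_iff₀' hN]
    exact hconv l
  simpa only [Fintype.sum_prod_type, sqrt_pow_of_nonneg hlam0] using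
    desired_channel_cross_term_bound_general (P ^ D) (one_div_nonneg.mpr hN.le) hQ C hC
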